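/- arXiv:math/0411393 — 4 statements merged into one kernel-verified Lean document; each statement's English description precedes it below -/
import Mathlib

section
/- Let n ≥ 1, let W_n be the subgroup of bijections of ℤ × ℤⁿ generated by the coordinate permutations and the involutions τ_i, and let 0 ≤ j ≤ n. Let a ∈ ℤⁿ be the vector whose first n − j entries equal 2 and whose last j entries equal 1. Then the W_n-orbit of (2, a) equals the set {(2, e) : e ∈ {0,1,2}ⁿ and exactly j of the entries e_1,…,e_n equal 1}. -/
/-! Each generator fixes the first coordinate, and at `r = 2` it preserves both the condition that all
entries lie in `{0,1,2}` and the number of entries equal to `1`, because `x ↦ 2 - x` swaps `0` and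
`2` and fixes `1`. So the orbit is contained in the right-hand side (`mem_levelSet_iff_of_mem_weyl`).

Conversely, given `e` with exactly `j` entries equal to `1`, a permutation moves the ones of `a` to
the positions of the ones of `e`, leaving `2` elsewhere, and the product of the commuting `τᵢ` over
the zero positions of `e` (`exists_flip`) turns the superfluous twos into zeros.
-/

/-- For a permutation `σ` of `{1,…,n}`, the bijection of `ℤ × ℤⁿ` sending
`(r, (a₁,…,aₙ))` to `(r, (a_{σ(1)},…,a_{σ(n)}))`. -/
def permMap {n : ℕ} (σ : Equiv.Perm (Fin n)) : Equiv.Perm (ℤ × (Fin n → ℤ)) where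
  toFun p := (p.1, fun i => p.2 (σ i))
  invFun p := (p.1, fun i => p.2 (σ.symm i))
  left_inv p := by simp
  right_inv p := by simp

/-- The involution `τᵢ` of `ℤ × ℤⁿ` replacing the `i`-th entry `aᵢ` by `r − aᵢ`. -/
def tauPerm {n : ℕ} (i : Fin n) : Equiv.Perm (ℤ × (Fin n → ℤ)) :=
  Function.Involutive.toPerm
    (fun p => (p.1, Function.update p.2 i (p.1 - p.2 i)))
    (by
      intro p
      simp [Function.update_idem])

/-- The pairs `(2, e)` with `e ∈ {0,1,2}ⁿ` having exactly `j` entries equal to `1`. -/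
def levelSet (n j : ℕ) : Set (ℤ × (Fin n → ℤ)) :=
  {p | p.1 = 2 ∧ (∀ i, p.2 i = 0 ∨ p.2 i = 1 ∨ p.2 i = 2) ∧
    (Finset.univ.filter fun i => p.2 i = 1).card = j}

/-- The group `Wₙ`. -/
def weylGroup (n : ℕ) : Subgroup (Equiv.Perm (ℤ × (Fin n → ℤ))) :=
  Subgroup.closure (Set.range (permMap (n := n)) ∪ Set.range (tauPerm (n := n)))

lemma permMap_mem_weylGroup {n : ℕ} (σ : Equiv.Perm (Fin n)) : permMap σ ∈ weylGroup n :=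
  Subgroup.subset_closure (Or.inl ⟨σ, rfl⟩)

lemma tauPerm_mem_weylGroup {n : ℕ} (i : Fin n) : tauPerm i ∈ weylGroup n :=
  Subgroup.subset_closure (Or.inr ⟨i, rfl⟩)

lemma tauPerm_apply {n : ℕ} (i : Fin n) (p : ℤ × (Fin n → ℤ)) :
    tauPerm i p = (p.1, Function.update p.2 i (p.1 - p.2 i)) := rfl

lemma mem_levelSet_iff_permMap {n j : ℕ} (σ : Equiv.Perm (Fin n)) (p : ℤ × (Fin n → ℤ)) :
    p ∈ levelSet n j ↔ permMap σ p ∈ levelSet n j := by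
  have hcard : (Finset.univ.filter fun i => p.2 (σ i) = 1).card =
      (Finset.univ.filter fun i => p.2 i = 1).card :=
    Finset.card_equiv σ (by simp)
  have hall : (∀ i, p.2 (σ i) = 0 ∨ p.2 (σ i) = 1 ∨ p.2 (σ i) = 2) ↔
      ∀ i, p.2 i = 0 ∨ p.2 i = 1 ∨ p.2 i = 2 :=
    σ.forall_congr_left.trans (by simp)
  simp only [levelSet, Set.mem_ofPred_eq, permMap, Equiv.coe_fn_mk, hcard, hall]

lemma mem_levelSet_iff_tauPerm {n j : ℕ} (i : Fin n) (p : ℤ × (Fin n → ℤ)) :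
    p ∈ levelSet n j ↔ tauPerm i p ∈ levelSet n j := by
  simp only [levelSet, Set.mem_ofPred_eq, tauPerm_apply]
  refine and_congr_right fun h => ?_
  have hone : ∀ k, Function.update p.2 i (p.1 - p.2 i) k = 1 ↔ p.2 k = 1 := by
    intro k
    by_cases hk : k = i
    · subst hk
      simp only [Function.update_self]
      omega
    · simp [hk]
  have hall : ∀ k, (Function.update p.2 i (p.1 - p.2 i) k = 0 ∨
      Function.update p.2 i (p.1 - p.2 i) k = 1 ∨ Function.update p.2 i (p.1 - p.2 i) k = 2) ↔
      (p.2 k = 0 ∨ p.2 k = 1 ∨ p.2 k = 2) := by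
    intro k
    by_cases hk : k = i
    · subst hk
      simp only [Function.update_self]
      omega
    · simp [hk]
  exact and_congr (forall_congr' fun k => (hall k).symm) (by simp only [hone])

/-- Stated as an equivalence so that the induction over the group passes to inverses. -/
lemma mem_levelSet_iff_of_mem_weyl {n j : ℕ} {g : Equiv.Perm (ℤ × (Fin n → ℤ))}
    (hg : g ∈ weylGroup n) : ∀ p, p ∈ levelSet n j ↔ g p ∈ levelSet n j := by
  induction hg using Subgroup.closure_induction with
  | mem x hx =>
    rcases hx with ⟨σ, rfl⟩ | ⟨i, rfl⟩
    · exact mem_levelSet_iff_permMap σ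
    · exact mem_levelSet_iff_tauPerm i
  | one => simp
  | mul x y _ _ hx hy => exact fun p => (hy p).trans (hx (y p))
  | inv x _ hx =>
    intro p
    simpa using (hx (x⁻¹ p)).symm

/-- The product of the `τᵢ` over `i ∈ s`, restricted to `r = 2`. -/
lemma exists_flip {n : ℕ} (s : Finset (Fin n)) :
    ∃ g ∈ weylGroup n, ∀ a : Fin n → ℤ,
      g (2, a) = (2, fun i => if i ∈ s then 2 - a i else a i) := by
  induction s using Finset.induction_on with
  | empty => exact ⟨1, one_mem _, by simp⟩
  | insert k s hk ih =>
    obtain ⟨g, hg, h⟩ := ih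
    refine ⟨tauPerm k * g, mul_mem (tauPerm_mem_weylGroup k) hg, fun a => ?_⟩
    rw [Equiv.Perm.mul_apply, h, tauPerm_apply]
    refine Prod.ext rfl (funext fun i => ?_)
    by_cases hi : i = k
    · subst hi
      simp [hk]
    · simp [hi]

lemma card_filter_not_lt {n j : ℕ} (hj : j ≤ n) :
    (Finset.univ.filter fun i : Fin n => ¬ (i : ℕ) < n - j).card = j := by
  have h1 := Finset.card_filter_add_card_filter_not (s := (Finset.univ : Finset (Fin n)))
    (fun i : Fin n => (i : ℕ) < n - j)
  have h2 : (Finset.univ.filter fun i : Fin n => (i : ℕ) < n - j).card = n - j := by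
    rw [Fin.card_filter_val_lt]
    omega
  simp only [h2, Finset.card_univ, Fintype.card_fin] at h1
  omega

/-- Two predicates on a finite type satisfied equally often differ by a permutation. -/
lemma exists_perm_iff {α : Type*} [Fintype α] (p q : α → Prop) [DecidablePred p]
    [DecidablePred q] (h : (Finset.univ.filter p).card = (Finset.univ.filter q).card) :
    ∃ σ : Equiv.Perm α, ∀ i, q (σ i) ↔ p i := by
  have hc : Fintype.card {x // p x} = Fintype.card {x // q x} := by
    rw [Fintype.card_subtype, Fintype.card_subtype, h]
  let e := Fintype.equivOfCardEq hc
  refine ⟨e.extendSubtype, fun i => ?_⟩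
  by_cases hi : p i
  · exact iff_of_true (e.extendSubtype_mem i hi) hi
  · exact iff_of_false (e.extendSubtype_not_mem i hi) hi

/-- for `0 ≤ j ≤ n`, the `Wₙ`-orbit of `(2, (2,…,2,1,…,1))`
(`n − j` twos followed by `j` ones) is the set of pairs `(2, e)` with
`e ∈ {0,1,2}ⁿ` having exactly `j` entries equal to `1`. -/
theorem weyl_orbit_of_two_one_vector (n j : ℕ) (hn : 1 ≤ n) (hj : j ≤ n) :
    {p : ℤ × (Fin n → ℤ) |
        ∃ g ∈ Subgroup.closure
          (Set.range (permMap (n := n)) ∪ Set.range (tauPerm (n := n))),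
          g (2, fun i : Fin n => if (i : ℕ) < n - j then (2 : ℤ) else 1) = p} =
      {p : ℤ × (Fin n → ℤ) | p.1 = 2 ∧
          (∀ i, p.2 i = 0 ∨ p.2 i = 1 ∨ p.2 i = 2) ∧
          (Finset.univ.filter fun i => p.2 i = 1).card = j} := by
  have hone : ∀ i : Fin n, (if (i : ℕ) < n - j then (2 : ℤ) else 1) = 1 ↔
      ¬ (i : ℕ) < n - j := by
    intro i
    split_ifs with h <;> simp [h]
  ext p
  constructor
  · rintro ⟨g, hg, rfl⟩
    refine (mem_levelSet_iff_of_mem_weyl (j := j) hg _).1 ⟨rfl, fun i => ?_, ?_⟩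
    · dsimp only
      split_ifs <;> simp
    · simp only [hone]
      exact card_filter_not_lt hj
  · obtain ⟨r, e⟩ := p
    rintro ⟨hr, he, hcard⟩
    dsimp only at hr he hcard
    subst hr
    obtain ⟨σ, hσ⟩ := exists_perm_iff (fun i => e i = 1) (fun i : Fin n => ¬ (i : ℕ) < n - j)
      (hcard.trans (card_filter_not_lt hj).symm)
    obtain ⟨g, hg, hflip⟩ := exists_flip (Finset.univ.filter fun i => e i = 0)
    refine ⟨g * permMap σ, mul_mem hg (permMap_mem_weylGroup σ), ?_⟩
    rw [Equiv.Perm.mul_apply]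
    refine (hflip _).trans (Prod.ext rfl (funext fun i => ?_))
    have hi : ¬ (σ i : ℕ) < n - j ↔ e i = 1 := hσ i
    have hei := he i
    simp only [Finset.mem_filter, Finset.mem_univ, true_and]
    split_ifs <;> omega
end

section
/- Let n ≥ 2, let 1 ≤ i ≤ n, and let c ∈ ℂ. In the polynomial ring ℂ[x_1,…,x_n], the following identity holds: ∑_{k=0}^{n−i+1} 𝔖^{(n)}_{k,i−1} − c·x_1⋯x_n = (x_n² + 1)·∑_{k=0}^{n−i} 𝔖^{(n−1)}_{k,i−1} + x_n·( ∑_{k=0}^{n−i+1} 𝔖^{(n−1)}_{k,i−2} − c·x_1⋯x_{n−1} ), where 𝔖^{(n−1)}_{k',j'} denotes the analogous symmetrized sum with the subsets A, B ranging over subsets of {1,…,n−1} (regarded inside ℂ[x_1,…,x_n]), and any 𝔖 with a negative subscript is 0. -/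
/-!
Each pair `(A, B)` of disjoint subsets of `{1, …, n}` omits `n`, or has `n ∈ A`, or has `n ∈ B`;
hence (`frakS_succ`)
`𝔖⁽ⁿ⁾ₖⱼ = 𝔖⁽ⁿ⁻¹⁾ₖⱼ + xₙ² 𝔖⁽ⁿ⁻¹⁾ₖ₋₁,ⱼ + xₙ 𝔖⁽ⁿ⁻¹⁾ₖ,ⱼ₋₁`.
Put `j = i - 1` and sum over `0 ≤ k ≤ n - i + 1`. In the first sum the term `k = n - i + 1` vanishes
because `k + j = n > n - 1` (`frakS_eq_zero_of_lt`), and in the second the term `k = 0` vanishes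
because of its negative subscript (`frakS_eq_zero_of_neg`), so both become the sum over
`0 ≤ k ≤ n - i` multiplied by `xₙ² + 1`. The monomial `x₁⋯xₙ` factors as `xₙ · x₁⋯xₙ₋₁`.
-/

open MvPolynomial

/-- `𝔖⁽ᵐ⁾ₖⱼ` regarded inside `ℂ[x₁,…,xₙ]` (variables indexed by `Fin n`, the
variable `xᵢ` being `X ⟨i−1⟩`): the sum over ordered pairs `(A, B)` of disjoint
subsets of `{x₁,…,x_m}` with `|A| = k`, `|B| = j` of `(∏_{i∈A} xᵢ²)(∏_{i∈B} xᵢ)`.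
The subscripts `k, j` are integers; the polynomial is `0` if `k < 0` or `j < 0`
(and also when `k + j > m`, since then no such pair of subsets exists). -/
noncomputable def frakS (n m : ℕ) (k j : ℤ) : MvPolynomial (Fin n) ℂ :=
  ∑ p ∈ Finset.univ.filter
      (fun p : Finset (Fin n) × Finset (Fin n) =>
        (∀ i ∈ p.1, (i : ℕ) < m) ∧ (∀ i ∈ p.2, (i : ℕ) < m) ∧
        p.1 ∩ p.2 = ∅ ∧ (p.1.card : ℤ) = k ∧ (p.2.card : ℤ) = j),
    (∏ i ∈ p.1, X i ^ 2) * ∏ i ∈ p.2, X i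

/-- Peeling off the variable `x_{t+1}` (that is, `X t`): it is in neither subset, in `A`, or in `B`. -/
lemma frakS_succ {n : ℕ} (t : Fin n) (k j : ℤ) :
    frakS n ((t : ℕ) + 1) k j =
      frakS n t k j + X t ^ 2 * frakS n t (k - 1) j + X t * frakS n t k (j - 1) := by
  have hlt : ∀ s : Fin n, (s : ℕ) < (t : ℕ) + 1 → s ≠ t → (s : ℕ) < t := by
    intro s h1 h2
    have : (s : ℕ) ≠ t := fun h => h2 (Fin.ext h)
    omega
  unfold frakS
  have hsplit : ∀ (S : Finset (Finset (Fin n) × Finset (Fin n)))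
      (f : Finset (Fin n) × Finset (Fin n) → MvPolynomial (Fin n) ℂ),
      ∑ p ∈ S, f p = ∑ p ∈ (S.filter (fun p => t ∉ p.1)).filter (fun p => t ∉ p.2), f p +
        ∑ p ∈ S.filter (fun p => t ∈ p.1), f p +
        ∑ p ∈ (S.filter (fun p => t ∉ p.1)).filter (fun p => t ∈ p.2), f p := by
    intro S f
    rw [← Finset.sum_filter_add_sum_filter_not S (fun p => t ∈ p.1),
      ← Finset.sum_filter_add_sum_filter_not (S.filter (fun p => t ∉ p.1)) (fun p => t ∈ p.2)]
    ring
  rw [hsplit, Finset.mul_sum, Finset.mul_sum]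
  refine congrArg₂ _ (congrArg₂ _ ?_ ?_) ?_
  · apply Finset.sum_congr _ (fun _ _ => rfl)
    ext ⟨A, B⟩
    simp only [Finset.mem_filter, Finset.mem_univ, true_and]
    constructor
    · rintro ⟨⟨⟨hA, hB, h⟩, h1⟩, h2⟩
      exact ⟨fun s hs => hlt s (hA s hs) (fun e => h1 (e ▸ hs)),
        fun s hs => hlt s (hB s hs) (fun e => h2 (e ▸ hs)), h⟩
    · rintro ⟨hA, hB, h⟩
      exact ⟨⟨⟨fun s hs => (hA s hs).trans (Nat.lt_succ_self _),
        fun s hs => (hB s hs).trans (Nat.lt_succ_self _), h⟩,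
        fun h => lt_irrefl _ (hA t h)⟩, fun h => lt_irrefl _ (hB t h)⟩
  · refine Finset.sum_nbij' (fun p => (p.1.erase t, p.2)) (fun p => (insert t p.1, p.2))
      ?_ ?_ ?_ ?_ ?_
    · rintro ⟨A, B⟩ h
      simp only [Finset.mem_filter, Finset.mem_univ, true_and] at h ⊢
      obtain ⟨⟨hA, hB, hd, hk, hj⟩, ht⟩ := h
      have hd' := Finset.disjoint_iff_inter_eq_empty.mpr hd
      refine ⟨fun s hs => hlt s (hA s (Finset.mem_of_mem_erase hs)) (Finset.ne_of_mem_erase hs),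
        fun s hs => hlt s (hB s hs) (fun e => Finset.disjoint_left.mp hd' ht (e ▸ hs)),
        Finset.disjoint_iff_inter_eq_empty.mp (hd'.mono_left (Finset.erase_subset _ _)), ?_, hj⟩
      have := Finset.card_erase_add_one ht
      omega
    · rintro ⟨A, B⟩ h
      simp only [Finset.mem_filter, Finset.mem_univ, true_and] at h ⊢
      obtain ⟨hA, hB, hd, hk, hj⟩ := h
      have hd' := Finset.disjoint_iff_inter_eq_empty.mpr hd
      have htA : t ∉ A := fun h => lt_irrefl _ (hA t h)
      have htB : t ∉ B := fun h => lt_irrefl _ (hB t h)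
      refine ⟨⟨?_, fun s hs => (hB s hs).trans (Nat.lt_succ_self _),
        Finset.disjoint_iff_inter_eq_empty.mp (Finset.disjoint_insert_left.mpr ⟨htB, hd'⟩),
        ?_, hj⟩, Finset.mem_insert_self _ _⟩
      · intro s hs
        rcases Finset.mem_insert.mp hs with rfl | hs
        · exact Nat.lt_succ_self _
        · exact (hA s hs).trans (Nat.lt_succ_self _)
      · rw [Finset.card_insert_of_notMem htA]; push_cast; omega
    · rintro ⟨A, B⟩ h
      simp only [Finset.mem_filter] at h
      simp [Finset.insert_erase h.2]
    · rintro ⟨A, B⟩ h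
      simp only [Finset.mem_filter] at h
      have htA : t ∉ A := fun h' => lt_irrefl _ (h.2.1 t h')
      simp [Finset.erase_insert htA]
    · rintro ⟨A, B⟩ h
      simp only [Finset.mem_filter] at h
      rw [← Finset.mul_prod_erase _ _ h.2]
      ring
  · refine Finset.sum_nbij' (fun p => (p.1, p.2.erase t)) (fun p => (p.1, insert t p.2))
      ?_ ?_ ?_ ?_ ?_
    · rintro ⟨A, B⟩ h
      simp only [Finset.mem_filter, Finset.mem_univ, true_and] at h ⊢
      obtain ⟨⟨⟨hA, hB, hd, hk, hj⟩, htA⟩, ht⟩ := h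
      have hd' := Finset.disjoint_iff_inter_eq_empty.mpr hd
      refine ⟨fun s hs => hlt s (hA s hs) (fun e => htA (e ▸ hs)),
        fun s hs => hlt s (hB s (Finset.mem_of_mem_erase hs)) (Finset.ne_of_mem_erase hs),
        Finset.disjoint_iff_inter_eq_empty.mp (hd'.mono_right (Finset.erase_subset _ _)), hk, ?_⟩
      have := Finset.card_erase_add_one ht
      omega
    · rintro ⟨A, B⟩ h
      simp only [Finset.mem_filter, Finset.mem_univ, true_and] at h ⊢
      obtain ⟨hA, hB, hd, hk, hj⟩ := h
      have hd' := Finset.disjoint_iff_inter_eq_empty.mpr hd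
      have htA : t ∉ A := fun h => lt_irrefl _ (hA t h)
      have htB : t ∉ B := fun h => lt_irrefl _ (hB t h)
      refine ⟨⟨⟨fun s hs => (hA s hs).trans (Nat.lt_succ_self _), ?_,
        Finset.disjoint_iff_inter_eq_empty.mp (Finset.disjoint_insert_right.mpr ⟨htA, hd'⟩),
        hk, ?_⟩, htA⟩, Finset.mem_insert_self _ _⟩
      · intro s hs
        rcases Finset.mem_insert.mp hs with rfl | hs
        · exact Nat.lt_succ_self _
        · exact (hB s hs).trans (Nat.lt_succ_self _)
      · rw [Finset.card_insert_of_notMem htB]; push_cast; omega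
    · rintro ⟨A, B⟩ h
      simp only [Finset.mem_filter] at h
      simp [Finset.insert_erase h.2]
    · rintro ⟨A, B⟩ h
      simp only [Finset.mem_filter] at h
      have htB : t ∉ B := fun h' => lt_irrefl _ (h.2.2.1 t h')
      simp [Finset.erase_insert htB]
    · rintro ⟨A, B⟩ h
      simp only [Finset.mem_filter] at h
      rw [← Finset.mul_prod_erase _ _ h.2]
      ring

lemma frakS_eq_zero_of_neg (n m : ℕ) {k : ℤ} (j : ℤ) (hk : k < 0) : frakS n m k j = 0 := by
  refine Finset.sum_eq_zero fun p hp => ?_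
  simp only [Finset.mem_filter] at hp
  omega

lemma frakS_eq_zero_of_lt (n m : ℕ) {k j : ℤ} (h : (m : ℤ) < k + j) : frakS n m k j = 0 := by
  refine Finset.sum_eq_zero fun p hp => ?_
  simp only [Finset.mem_filter, Finset.mem_univ, true_and] at hp
  obtain ⟨hA, hB, hd, hk, hj⟩ := hp
  have hcard : (p.1 ∪ p.2).card ≤ (Finset.range m).card := by
    refine Finset.card_le_card_of_injOn (fun s => (s : ℕ)) ?_ (Fin.val_injective.injOn)
    intro s hs
    rcases Finset.mem_union.mp hs with hs | hs
    · simpa using hA s hs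
    · simpa using hB s hs
  rw [Finset.card_union_of_disjoint (Finset.disjoint_iff_inter_eq_empty.mpr hd),
    Finset.card_range] at hcard
  omega

/-- for `n ≥ 2`, `1 ≤ i ≤ n` and `c ∈ ℂ`, in `ℂ[x₁,…,xₙ]`:
`∑_{k=0}^{n−i+1} 𝔖⁽ⁿ⁾ₖ,ᵢ₋₁ − c·x₁⋯xₙ
  = (xₙ² + 1)·∑_{k=0}^{n−i} 𝔖⁽ⁿ⁻¹⁾ₖ,ᵢ₋₁ + xₙ·(∑_{k=0}^{n−i+1} 𝔖⁽ⁿ⁻¹⁾ₖ,ᵢ₋₂ − c·x₁⋯xₙ₋₁)`,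
where any `𝔖` with a negative subscript is `0`. -/
theorem f_i_decomposition (n : ℕ) (hn : 2 ≤ n) (i : ℕ) (hi1 : 1 ≤ i) (hi2 : i ≤ n)
    (c : ℂ) :
    (∑ k ∈ Finset.range (n - i + 2), frakS n n (k : ℤ) ((i : ℤ) - 1)) -
        C c * ∏ t : Fin n, X t =
      (X (⟨n - 1, by omega⟩ : Fin n) ^ 2 + 1) *
          (∑ k ∈ Finset.range (n - i + 1), frakS n (n - 1) (k : ℤ) ((i : ℤ) - 1)) +
        X (⟨n - 1, by omega⟩ : Fin n) *
          ((∑ k ∈ Finset.range (n - i + 2), frakS n (n - 1) (k : ℤ) ((i : ℤ) - 2)) -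
            C c * ∏ t ∈ Finset.univ.filter (fun t : Fin n => (t : ℕ) < n - 1), X t) := by
  set l : Fin n := ⟨n - 1, by omega⟩ with hl
  have hrec : ∀ k j : ℤ, frakS n n k j = frakS n (n - 1) k j
      + X l ^ 2 * frakS n (n - 1) (k - 1) j + X l * frakS n (n - 1) k (j - 1) := by
    intro k j
    have h := frakS_succ l k j
    rwa [show (l : ℕ) + 1 = n by simp only [hl]; omega] at h
  have hprod : (∏ t : Fin n, X t : MvPolynomial (Fin n) ℂ) =
      X l * ∏ t ∈ Finset.univ.filter (fun t : Fin n => (t : ℕ) < n - 1), X t := by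
    rw [← Finset.mul_prod_erase Finset.univ _ (Finset.mem_univ l)]
    congr 1
    refine Finset.prod_congr ?_ fun _ _ => rfl
    ext s
    simp only [Finset.mem_erase, Finset.mem_univ, and_true, Finset.mem_filter, true_and, ne_eq,
      Fin.ext_iff, hl]
    omega
  have hfirst : ∑ k ∈ Finset.range (n - i + 2), frakS n (n - 1) (k : ℤ) ((i : ℤ) - 1) =
      ∑ k ∈ Finset.range (n - i + 1), frakS n (n - 1) (k : ℤ) ((i : ℤ) - 1) := by
    rw [Finset.sum_range_succ, frakS_eq_zero_of_lt _ _ (by omega), add_zero]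
  have hsecond : ∑ k ∈ Finset.range (n - i + 2), frakS n (n - 1) ((k : ℤ) - 1) ((i : ℤ) - 1) =
      ∑ k ∈ Finset.range (n - i + 1), frakS n (n - 1) (k : ℤ) ((i : ℤ) - 1) := by
    rw [Finset.sum_range_succ', frakS_eq_zero_of_neg _ _ _ (by simp), add_zero]
    simp
  simp only [hrec, Finset.sum_add_distrib, ← Finset.mul_sum, hfirst, hsecond, hprod,
    show (i : ℤ) - 1 - 1 = i - 2 by ring]
  ring
end

section
/- Let c_1, c_2, x_1, x_2 ∈ ℂ with x_1 ≠ 0 and x_2 ≠ 0. If 1 + x_1² + x_2² + x_1²x_2² = c_1·x_1x_2 and x_1 + x_2 + x_1²x_2 + x_1x_2² = c_2·x_1x_2, then x_2⁴ − c_2·x_2³ + (2 + c_1)·x_2² − c_2·x_2 + 1 = 0. -/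
/-- genus-2 elimination. If `x₁, x₂ ≠ 0` satisfy the two symmetric
equations, then `x₂` is a root of the palindromic quartic
`X⁴ − c₂X³ + (2 + c₁)X² − c₂X + 1`. -/
theorem genus_two_elimination (c₁ c₂ x₁ x₂ : ℂ) (hx₁ : x₁ ≠ 0) (hx₂ : x₂ ≠ 0)
    (h1 : 1 + x₁ ^ 2 + x₂ ^ 2 + x₁ ^ 2 * x₂ ^ 2 = c₁ * x₁ * x₂)
    (h2 : x₁ + x₂ + x₁ ^ 2 * x₂ + x₁ * x₂ ^ 2 = c₂ * x₁ * x₂) :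
    x₂ ^ 4 - c₂ * x₂ ^ 3 + (2 + c₁) * x₂ ^ 2 - c₂ * x₂ + 1 = 0 := by
  -- With `uᵢ = xᵢ + xᵢ⁻¹` the hypotheses read `u₁ u₂ = c₁` and `u₁ + u₂ = c₂`, and the quartic is
  -- `x₂² (u₂² - c₂ u₂ + c₁)`, so it vanishes by Vieta. Clearing denominators costs a factor `x₁`.
  refine (mul_eq_zero.mp ?_).resolve_left hx₁
  linear_combination (x₂ ^ 2 + 1) * h2 - x₂ * h1
end

section
/- Let c_1, c_2, c_3, x_1, x_2, x_3 ∈ ℂ with x_1 ≠ 0, x_2 ≠ 0 and x_3 ≠ 0. Suppose that (1 + x_1²)(1 + x_2²)(1 + x_3²) = c_1·x_1x_2x_3, that (x_1 + x_2 + x_3) + (x_1²x_2 + x_1²x_3 + x_2²x_1 + x_2²x_3 + x_3²x_1 + x_3²x_2) + (x_1²x_2²x_3 + x_1²x_3²x_2 + x_2²x_3²x_1) = c_2·x_1x_2x_3, and that (x_1x_2 + x_1x_3 + x_2x_3) + x_1x_2x_3·(x_1 + x_2 + x_3) = c_3·x_1x_2x_3. Then x_3⁶ − c_3·x_3⁵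 + (c_2 + 3)·x_3⁴ − (c_1 + 2c_3)·x_3³ + (c_2 + 3)·x_3² − c_3·x_3 + 1 = 0. -/
/-- genus-3 elimination. If `x₁, x₂, x₃ ≠ 0` satisfy the three symmetric
equations, then `x₃` is a root of the palindromic sextic
`X⁶ − c₃X⁵ + (c₂+3)X⁴ − (c₁+2c₃)X³ + (c₂+3)X² − c₃X + 1`. -/
theorem genus_three_elimination (c₁ c₂ c₃ x₁ x₂ x₃ : ℂ)
    (hx₁ : x₁ ≠ 0) (hx₂ : x₂ ≠ 0) (hx₃ : x₃ ≠ 0)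
    (h1 : (1 + x₁ ^ 2) * (1 + x₂ ^ 2) * (1 + x₃ ^ 2) = c₁ * x₁ * x₂ * x₃)
    (h2 : (x₁ + x₂ + x₃) +
        (x₁ ^ 2 * x₂ + x₁ ^ 2 * x₃ + x₂ ^ 2 * x₁ + x₂ ^ 2 * x₃ + x₃ ^ 2 * x₁ + x₃ ^ 2 * x₂) +
        (x₁ ^ 2 * x₂ ^ 2 * x₃ + x₁ ^ 2 * x₃ ^ 2 * x₂ + x₂ ^ 2 * x₃ ^ 2 * x₁) = c₂ * x₁ * x₂ * x₃)
    (h3 : (x₁ * x₂ + x₁ * x₃ + x₂ * x₃) + x₁ * x₂ * x₃ * (x₁ + x₂ + x₃) = c₃ * x₁ * x₂ * x₃) :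
    x₃ ^ 6 - c₃ * x₃ ^ 5 + (c₂ + 3) * x₃ ^ 4 - (c₁ + 2 * c₃) * x₃ ^ 3 +
      (c₂ + 3) * x₃ ^ 2 - c₃ * x₃ + 1 = 0 := by
  -- Put `yᵢ = xᵢ + 1 / xᵢ`. The hypotheses say that `c₁, c₂, c₃` are the elementary symmetric
  -- functions `y₁ y₂ y₃`, `y₁ y₂ + y₁ y₃ + y₂ y₃`, `y₁ + y₂ + y₃`, so `y₃` is a root of
  -- `T ^ 3 - c₃ T ^ 2 + c₂ T - c₁`, and the sextic is `x₃ ^ 3` times this cubic at `y₃`.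
  -- Multiplying by `x₁ x₂` turns the resulting relation into a polynomial combination.
  refine (mul_eq_zero.mp ?_).resolve_left (mul_ne_zero hx₁ hx₂)
  linear_combination (x₃ ^ 2 + 1) ^ 2 * h3 - x₃ * (x₃ ^ 2 + 1) * h2 + x₃ ^ 2 * h1
end
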